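/- For every infinite cardinal κ there exists a hereditarily indecomposable continuum of weight exactly κ: a nonempty compact connected Hausdorff space that is hereditarily indecomposable, admits a base for its topology of cardinality κ, and admits no base of cardinality strictly less than κ. -/

import Mathlib

open Set Topology Function

universe u

set_option linter.unusedSectionVars false

/-- A space is hereditarily indecomposable if whenever two subcontinua
(nonempty closed connected subsets) meet, one contains the other. -/
def HereditarilyIndecomposable (X : Type*) [TopologicalSpace X] : Prop :=
  ∀ A B : Set X, IsClosed A → IsConnected A → IsClosed B → IsConnected B →
    (A ∩ B).Nonempty → A ⊆ B ∨ B ⊆ A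

namespace HIC

/-- The zigzag relation: `h` is one of the (at most three) preimages of `s` under a fixed
piecewise linear zigzag map. -/
def Rel (s h : ℝ) : Prop :=
  (s ≤ 1 ∧ h = s - 2) ∨ (-1 ≤ s ∧ s ≤ 1 ∧ h = -s) ∨ (-1 ≤ s ∧ h = s + 2)

theorem isClosed_rel : IsClosed {p : ℝ × ℝ | Rel p.1 p.2} := by
  have c1 : IsClosed {p : ℝ × ℝ | p.1 ≤ 1} := isClosed_le (by fun_prop) (by fun_prop)
  have c2 : IsClosed {p : ℝ × ℝ | -1 ≤ p.1} := isClosed_le (by fun_prop) (by fun_prop)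
  have d1 : IsClosed {p : ℝ × ℝ | p.2 = p.1 - 2} := isClosed_eq (by fun_prop) (by fun_prop)
  have d2 : IsClosed {p : ℝ × ℝ | p.2 = -p.1} := isClosed_eq (by fun_prop) (by fun_prop)
  have d3 : IsClosed {p : ℝ × ℝ | p.2 = p.1 + 2} := isClosed_eq (by fun_prop) (by fun_prop)
  exact (c1.inter d1).union ((c2.inter (c1.inter d2)).union (c2.inter d3))

theorem Rel.abs_le {s h : ℝ} (H : Rel s h) : |h| ≤ |s| + 2 := by
  rcases H with ⟨_, rfl⟩ | ⟨_, _, rfl⟩ | ⟨_, rfl⟩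
  · calc |s - 2| ≤ |s| + |2| := abs_sub _ _
      _ = _ := by norm_num
  · rw [abs_neg]; linarith
  · calc |s + 2| ≤ |s| + |2| := abs_add_le _ _
      _ = _ := by norm_num

section Step

variable {X : Type*} [TopologicalSpace X]

/-- Points over which the fibre of `C` has an odd number of points; `D` stands for the
complement of `C`. -/
def OddSet (f : X → ℝ) (C D : Set (X × ℝ)) : Set X :=
  {x | f x ≤ -1 ∧ (x, f x - 2) ∈ C} ∪ {x | 1 ≤ f x ∧ (x, f x + 2) ∈ C} ∪
  {x | (-1 ≤ f x ∧ f x ≤ 1) ∧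
    (((x, f x - 2) ∈ C ∧ (x, -f x) ∈ C ∧ (x, f x + 2) ∈ C) ∨
     ((x, f x - 2) ∈ C ∧ (x, -f x) ∈ D ∧ (x, f x + 2) ∈ D) ∨
     ((x, f x - 2) ∈ D ∧ (x, -f x) ∈ C ∧ (x, f x + 2) ∈ D) ∨
     ((x, f x - 2) ∈ D ∧ (x, -f x) ∈ D ∧ (x, f x + 2) ∈ C))}

theorem isClosed_oddSet {f : X → ℝ} (hf : Continuous f) {C D : Set (X × ℝ)}
    (hC : IsClosed C) (hD : IsClosed D) : IsClosed (OddSet f C D) := by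
  have a1 : IsClosed {x | (x, f x - 2) ∈ C} := hC.preimage (by fun_prop)
  have a2 : IsClosed {x | (x, - f x) ∈ C} := hC.preimage (by fun_prop)
  have a3 : IsClosed {x | (x, f x + 2) ∈ C} := hC.preimage (by fun_prop)
  have b1 : IsClosed {x | (x, f x - 2) ∈ D} := hD.preimage (by fun_prop)
  have b2 : IsClosed {x | (x, - f x) ∈ D} := hD.preimage (by fun_prop)
  have b3 : IsClosed {x | (x, f x + 2) ∈ D} := hD.preimage (by fun_prop)
  have c1 : IsClosed {x | f x ≤ -1} := isClosed_le hf continuous_const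
  have c2 : IsClosed {x | 1 ≤ f x} := isClosed_le continuous_const hf
  have c3 : IsClosed {x | f x ≤ 1} := isClosed_le hf continuous_const
  have c4 : IsClosed {x | -1 ≤ f x} := isClosed_le continuous_const hf
  exact ((c1.inter a1).union (c2.inter a3)).union ((c4.inter c3).inter
    ((a1.inter (a2.inter a3)).union ((a1.inter (b2.inter b3)).union
      ((b1.inter (a2.inter b3)).union (b1.inter (b2.inter a3))))))

/-- The pullback of the zigzag map along `f`. -/
abbrev Pull (f : X → ℝ) : Type _ := {p : X × ℝ // Rel (f p.1) p.2}

theorem odd_dichotomy [ConnectedSpace X] {f : X → ℝ} (hf : Continuous f)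
    (C : Set (X × ℝ)) (D : Set (X × ℝ)) (hC : IsClosed C) (hD : IsClosed D)
    (hCD : ∀ p : X × ℝ, Rel (f p.1) p.2 → (p ∈ D ↔ p ∉ C)) :
    OddSet f C D = ∅ ∨ OddSet f C D = univ := by
  have key : ∀ x, (x ∈ OddSet f D C ↔ x ∉ OddSet f C D) := by
    intro x
    have h1 : f x ≤ 1 → ((x, f x - 2) ∈ D ↔ (x, f x - 2) ∉ C) :=
      fun h => hCD _ (Or.inl ⟨h, rfl⟩)
    have h2 : -1 ≤ f x → f x ≤ 1 → ((x, - f x) ∈ D ↔ (x, - f x) ∉ C) :=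
      fun h h' => hCD _ (Or.inr (Or.inl ⟨h, h', rfl⟩))
    have h3 : -1 ≤ f x → ((x, f x + 2) ∈ D ↔ (x, f x + 2) ∉ C) :=
      fun h => hCD _ (Or.inr (Or.inr ⟨h, rfl⟩))
    simp only [OddSet, mem_union, mem_ofPred_eq]
    rcases lt_trichotomy (f x) (-1) with h | h | h
    · have i1 := h1 (by linarith)
      have e1 : f x ≤ -1 := h.le
      have e2 : ¬ (1 ≤ f x) := by linarith
      have e3 : ¬ (-1 ≤ f x) := by linarith
      simp only [e1, e2, e3, i1, true_and, false_and, or_false]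
    · have e : f x + 2 = - f x := by linarith
      have i1 := h1 (by linarith)
      have i2 := h2 (by linarith) (by linarith)
      have e1 : f x ≤ -1 := h.le
      have e2 : ¬ (1 ≤ f x) := by linarith
      have e3 : (-1 ≤ f x) := by linarith
      have e4 : f x ≤ 1 := by linarith
      simp only [e1, e2, e3, e4, e, i1, i2, true_and, false_and, or_false]
      by_cases q1 : (x, f x - 2) ∈ C <;> by_cases q2 : (x, - f x) ∈ C <;>
        simp only [q1, q2] <;> decide
    · rcases lt_trichotomy (f x) 1 with h' | h' | h'
      · have i1 := h1 (by linarith)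
        have i2 := h2 (by linarith) (by linarith)
        have i3 := h3 (by linarith)
        have e1 : ¬ f x ≤ -1 := by linarith
        have e2 : ¬ (1 ≤ f x) := by linarith
        have e3 : (-1 ≤ f x) := by linarith
        have e4 : f x ≤ 1 := by linarith
        simp only [e1, e2, e3, e4, i1, i2, i3, true_and, false_and, false_or]
        by_cases q1 : (x, f x - 2) ∈ C <;> by_cases q2 : (x, - f x) ∈ C <;>
          by_cases q3 : (x, f x + 2) ∈ C <;> simp only [q1, q2, q3] <;> decide
      · have e : f x - 2 = - f x := by linarith
        have i1 := h2 (by linarith) (by linarith)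
        have i2 := h3 (by linarith)
        have e1 : ¬ f x ≤ -1 := by linarith
        have e2 :  (1 ≤ f x) := by linarith
        have e3 : (-1 ≤ f x) := by linarith
        have e4 : f x ≤ 1 := by linarith
        simp only [e1, e2, e3, e4, e, i1, i2, true_and, false_and, false_or]
        by_cases q1 : (x, f x + 2) ∈ C <;> by_cases q2 : (x, - f x) ∈ C <;>
          simp only [q1, q2] <;> decide
      · have i2 := h3 (by linarith)
        have e1 : ¬ f x ≤ -1 := by linarith
        have e2 :  (1 ≤ f x) := by linarith
        have e3 : (-1 ≤ f x) := by linarith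
        have e4 : ¬ f x ≤ 1 := by linarith
        simp only [e1, e2, e4, i2, true_and, false_and, and_false, false_or, or_false]
  have hcl : IsClopen (OddSet f C D) := by
    refine ⟨isClosed_oddSet hf hC hD, ?_⟩
    have : OddSet f C D = (OddSet f D C)ᶜ := by
      ext x; simp [key x]
    rw [this]
    exact (isClosed_oddSet hf hD hC).isOpen_compl
  exact isClopen_iff.1 hcl

variable [CompactSpace X] [T2Space X]

/-- The odd set of a subset of the pullback. -/
def Odd (f : X → ℝ) (C : Set (Pull f)) : Set X :=
  OddSet f (Subtype.val '' C) (Subtype.val '' Cᶜ)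

theorem isClosed_pull {f : X → ℝ} (hf : Continuous f) :
    IsClosed {p : X × ℝ | Rel (f p.1) p.2} :=
  isClosed_rel.preimage (f := fun p : X × ℝ => (f p.1, p.2)) (by fun_prop)

theorem compact_pull {f : X → ℝ} (hf : Continuous f) : CompactSpace (Pull f) := by
  refine (isCompact_iff_compactSpace (s := {p : X × ℝ | Rel (f p.1) p.2})).1 ?_
  obtain ⟨M, hM⟩ := (isCompact_range hf).isBounded.exists_norm_le
  refine (isCompact_univ.prod (isCompact_Icc (a := -(M+2)) (b := M+2))).of_isClosed_subset
    (isClosed_pull hf) ?_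
  rintro ⟨x, h⟩ hx
  refine ⟨mem_univ _, ?_⟩
  have h1 := Rel.abs_le hx
  have h2 := hM (f x) ⟨x, rfl⟩
  rw [Real.norm_eq_abs] at h2
  simp only at h1
  exact abs_le.1 (by linarith)

theorem odd_dich [ConnectedSpace X] {f : X → ℝ} (hf : Continuous f) {C : Set (Pull f)}
    (hC : IsClopen C) : Odd f C = ∅ ∨ Odd f C = univ := by
  refine odd_dichotomy hf _ _ ?_ ?_ ?_
  · exact (isClosed_pull hf).isClosedEmbedding_subtypeVal.isClosedMap _ hC.1
  · exact (isClosed_pull hf).isClosedEmbedding_subtypeVal.isClosedMap _ hC.compl.1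
  · intro p hp
    simp [hp]

theorem odd_univ {f : X → ℝ} : Odd f univ = univ := by
  refine eq_univ_of_forall fun x => ?_
  have k : ∀ r, Rel (f x) r → (x, r) ∈ (Subtype.val '' (univ : Set (Pull f)) : Set (X × ℝ)) :=
    fun r hr => ⟨⟨(x, r), hr⟩, mem_univ _, rfl⟩
  simp only [Odd, OddSet, mem_union, mem_ofPred_eq]
  rcases le_total (f x) (-1) with h | h
  · left; left; exact ⟨h, k _ (Or.inl ⟨by linarith, rfl⟩)⟩
  · rcases le_total (f x) 1 with h' | h'
    · right
      exact ⟨⟨h, h'⟩, Or.inl ⟨k _ (Or.inl ⟨h', rfl⟩), k _ (Or.inr (Or.inl ⟨h, h', rfl⟩)),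
        k _ (Or.inr (Or.inr ⟨h, rfl⟩))⟩⟩
    · left; right; exact ⟨h', k _ (Or.inr (Or.inr ⟨h, rfl⟩))⟩

theorem odd_of_miss {f : X → ℝ} {C : Set (Pull f)} {x : X}
    (h : ∀ p ∈ C, p.1.1 ≠ x) : x ∉ Odd f C := by
  have : ∀ r, (x, r) ∉ Subtype.val '' C := by
    rintro r ⟨p, hp, hpx⟩
    exact h p hp (by rw [hpx])
  simp only [Odd, OddSet, mem_union, mem_ofPred_eq, this, false_and, and_false, or_false,
    not_false_eq_true]

theorem prop_aux (u v a b c a' b' c' : Prop)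
    (hC : ¬ ((u ∧ a ∨ v ∧ c) ∨ (a ∧ b ∧ c ∨ a ∧ ¬ b ∧ ¬ c ∨ ¬ a ∧ b ∧ ¬ c ∨ ¬ a ∧ ¬ b ∧ c)))
    (hD : ¬ ((u ∧ a' ∨ v ∧ c') ∨
      (a' ∧ b' ∧ c' ∨ a' ∧ ¬ b' ∧ ¬ c' ∨ ¬ a' ∧ b' ∧ ¬ c' ∨ ¬ a' ∧ ¬ b' ∧ c')))
    (d1 : ¬ (a ∧ a')) (d2 : ¬ (b ∧ b')) (d3 : ¬ (c ∧ c')) :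
    ¬ ((u ∧ (a ∨ a') ∨ v ∧ (c ∨ c')) ∨
      ((a ∨ a') ∧ (b ∨ b') ∧ (c ∨ c') ∨ (a ∨ a') ∧ ¬ (b ∨ b') ∧ ¬ (c ∨ c') ∨
        ¬ (a ∨ a') ∧ (b ∨ b') ∧ ¬ (c ∨ c') ∨ ¬ (a ∨ a') ∧ ¬ (b ∨ b') ∧ (c ∨ c'))) := by
  grind

theorem odd_add {f : X → ℝ} {C D : Set (Pull f)} (hd : Disjoint C D) {x : X}
    (hC : x ∉ Odd f C) (hD : x ∉ Odd f D) : x ∉ Odd f (C ∪ D) := by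
  have g : ∀ r, Rel (f x) r → ((x, r) ∈ Subtype.val '' Cᶜ ↔ ¬ (x, r) ∈ Subtype.val '' C) := by
    intro r hr; simp [hr]
  have g' : ∀ r, Rel (f x) r → ((x, r) ∈ Subtype.val '' Dᶜ ↔ ¬ (x, r) ∈ Subtype.val '' D) := by
    intro r hr; simp [hr]
  have k : ∀ r, Rel (f x) r →
      ((x, r) ∈ Subtype.val '' (C ∪ D)ᶜ ↔ ¬ (x, r) ∈ Subtype.val '' (C ∪ D)) := by
    intro r hr; simp [hr]
  have k1 : ∀ r, ((x, r) ∈ Subtype.val '' (C ∪ D) ↔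
      ((x, r) ∈ Subtype.val '' C ∨ (x, r) ∈ Subtype.val '' D)) := by
    intro r; rw [image_union]; rfl
  have k2 : ∀ r, ¬ ((x, r) ∈ Subtype.val '' C ∧ (x, r) ∈ Subtype.val '' D) := by
    rintro r ⟨⟨p, hp, hpe⟩, ⟨q, hq, hqe⟩⟩
    have : p = q := Subtype.ext (hpe.trans hqe.symm)
    subst this
    exact hd.le_bot ⟨hp, hq⟩
  simp only [Odd, OddSet, mem_union, mem_ofPred_eq] at *
  have r1 : f x ≤ 1 → Rel (f x) (f x - 2) := fun h => Or.inl ⟨h, rfl⟩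
  have r2 : -1 ≤ f x → f x ≤ 1 → Rel (f x) (- f x) := fun h h' => Or.inr (Or.inl ⟨h, h', rfl⟩)
  have r3 : -1 ≤ f x → Rel (f x) (f x + 2) := fun h => Or.inr (Or.inr ⟨h, rfl⟩)
  have d1 := k2 (f x - 2)
  have d2 := k2 (- f x)
  have d3 := k2 (f x + 2)
  by_cases m : -1 ≤ f x ∧ f x ≤ 1
  · obtain ⟨m1, m2⟩ := m
    rw [g _ (r1 m2), g _ (r2 m1 m2), g _ (r3 m1)] at hC
    rw [g' _ (r1 m2), g' _ (r2 m1 m2), g' _ (r3 m1)] at hD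
    rw [k _ (r1 m2), k _ (r2 m1 m2), k _ (r3 m1)]
    rw [k1, k1, k1]
    simp only [m1, m2, true_and] at hC hD ⊢
    exact prop_aux _ _ _ _ _ _ _ _ hC hD d1 d2 d3
  · simp only [m, false_and, or_false] at hC hD ⊢
    rw [k1, k1]
    rintro (⟨h, h' | h'⟩ | ⟨h, h' | h'⟩)
    · exact hC (Or.inl ⟨h, h'⟩)
    · exact hD (Or.inl ⟨h, h'⟩)
    · exact hC (Or.inr ⟨h, h'⟩)
    · exact hD (Or.inr ⟨h, h'⟩)

/-- Single step: some component of the pullback maps onto the base. -/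
theorem step [ConnectedSpace X] {f : X → ℝ} (hf : Continuous f) :
    ∃ Z : Set (X × ℝ), IsCompact Z ∧ IsConnected Z ∧ (∀ p ∈ Z, Rel (f p.1) p.2) ∧
      Prod.fst '' Z = univ := by
  have := compact_pull hf
  by_contra hcon
  have hno : ∀ z : Pull f, ∃ x : X, ∀ p ∈ connectedComponent z, p.1.1 ≠ x := by
    intro z
    by_contra h
    push Not at h
    refine hcon ⟨Subtype.val '' connectedComponent z, ?_, ?_, ?_, ?_⟩
    · exact isClosed_connectedComponent.isCompact.image continuous_subtype_val
    · exact isConnected_connectedComponent.image _ continuous_subtype_val.continuousOn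
    · rintro _ ⟨p, _, rfl⟩; exact p.2
    · refine eq_univ_of_forall fun x => ?_
      obtain ⟨p, hp, hpx⟩ := h x
      exact ⟨p.1, ⟨p, hp, rfl⟩, hpx⟩
  have hloc : ∀ z : Pull f, ∃ C : Set (Pull f), IsClopen C ∧ z ∈ C ∧
      ∃ x : X, ∀ p ∈ C, p.1.1 ≠ x := by
    intro z
    obtain ⟨x, hx⟩ := hno z
    rw [connectedComponent_eq_iInter_isClopen] at hx
    let F : Set (Pull f) := {p | p.1.1 = x}
    have hF : IsClosed F := isClosed_eq (by fun_prop) continuous_const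
    have : Nonempty {s : Set (Pull f) // IsClopen s ∧ z ∈ s} :=
      ⟨⟨univ, isClopen_univ, mem_univ _⟩⟩
    have := hF.isCompact.elim_directed_family_closed
      (fun s : {s : Set (Pull f) // IsClopen s ∧ z ∈ s} => s.1) ?_ ?_ ?_
    · obtain ⟨s, hs⟩ := this
      refine ⟨s.1, s.2.1, s.2.2, x, fun p hp hpx => ?_⟩
      have : p ∈ F ∩ s.1 := ⟨hpx, hp⟩
      rw [hs] at this
      exact this
    · exact fun s => s.2.1.1
    · rw [eq_empty_iff_forall_notMem]
      rintro p ⟨hp1, hp2⟩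
      exact hx p hp2 hp1
    · intro s t
      exact ⟨⟨s.1 ∩ t.1, s.2.1.inter t.2.1, s.2.2, t.2.2⟩, inter_subset_left, inter_subset_right⟩
  have main : ∃ C : Set (Pull f), IsClopen C ∧ univ ⊆ C ∧
      ∀ D : Set (Pull f), IsClopen D → D ⊆ C → Odd f D = ∅ := by
    refine isCompact_univ.induction_on (p := fun s => ∃ C : Set (Pull f), IsClopen C ∧ s ⊆ C ∧
      ∀ D : Set (Pull f), IsClopen D → D ⊆ C → Odd f D = ∅) ?_ ?_ ?_ ?_
    · refine ⟨∅, isClopen_empty, subset_rfl, fun D _ hD => ?_⟩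
      rw [subset_empty_iff.1 hD, eq_empty_iff_forall_notMem]
      exact fun x => odd_of_miss (by simp)
    · rintro s t hst ⟨C, h1, h2, h3⟩
      exact ⟨C, h1, hst.trans h2, h3⟩
    · rintro s t ⟨C, h1, h2, h3⟩ ⟨C', h1', h2', h3'⟩
      refine ⟨C ∪ C', h1.union h1', union_subset_union h2 h2', fun D hD hDC => ?_⟩
      have e1 := h3 (D ∩ C) (hD.inter h1) inter_subset_right
      have e2 := h3' (D \ C) (hD.diff h1) (by
        rintro p ⟨hp, hp'⟩
        exact (hDC hp).resolve_left hp')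
      rw [← inter_union_sdiff D C, eq_empty_iff_forall_notMem]
      intro x
      refine odd_add ?_ (by simp [e1]) (by simp [e2])
      exact disjoint_sdiff_right.mono_left inter_subset_right
    · intro z _
      obtain ⟨C, hC, hz, x, hx⟩ := hloc z
      refine ⟨C, mem_nhdsWithin_of_mem_nhds (hC.2.mem_nhds hz), C, hC, subset_rfl, ?_⟩
      intro D hD hDC
      rcases odd_dich hf hD with h | h
      · exact h
      · exact absurd (h ▸ mem_univ x) (odd_of_miss fun p hp => hx p (hDC hp))
  obtain ⟨C, hC, hCu, h⟩ := main
  have := h univ isClopen_univ hCu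
  rw [odd_univ] at this
  exact univ_nonempty.ne_empty this

end Step

/-- Step lemma for a compact connected subset. -/
theorem step_set {E : Type*} [TopologicalSpace E] [T2Space E] {W : Set E} (hW : IsCompact W)
    (hWc : IsConnected W) {f : E → ℝ} (hf : Continuous f) :
    ∃ Z : Set (E × ℝ), IsCompact Z ∧ IsConnected Z ∧ (∀ p ∈ Z, Rel (f p.1) p.2) ∧
      Prod.fst '' Z = W := by
  have : CompactSpace W := isCompact_iff_compactSpace.1 hW
  have : ConnectedSpace W := isConnected_iff_connectedSpace.1 hWc
  obtain ⟨Z, h1, h2, h3, h4⟩ := step (X := W) (f := fun w => f w.1) (by fun_prop)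
  have hc : Continuous (fun p : W × ℝ => (p.1.1, p.2)) := by fun_prop
  refine ⟨(fun p : W × ℝ => (p.1.1, p.2)) '' Z, h1.image hc, h2.image _ hc.continuousOn, ?_, ?_⟩
  · rintro _ ⟨p, hp, rfl⟩
    exact h3 p hp
  · ext w
    constructor
    · rintro ⟨_, ⟨p, hp, rfl⟩, rfl⟩
      exact p.1.2
    · intro hw
      have : (⟨w, hw⟩ : W) ∈ Prod.fst '' Z := h4 ▸ mem_univ _
      obtain ⟨p, hp, hpe⟩ := this
      exact ⟨_, ⟨p, hp, rfl⟩, by simp [hpe]⟩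

/-- Terms naming continuous functions. -/
inductive T (ι : Type u) : Type u
  | var : ι → T ι
  | con : ℚ → T ι
  | add : T ι → T ι → T ι
  | mul : T ι → T ι → T ι
  | root : T ι → T ι

namespace T

variable {ι : Type u}

/-- Bound for the value of a term. -/
noncomputable def bd : T ι → ℝ
  | var _ => 1
  | con q => |(q : ℝ)|
  | add s t => bd s + bd t
  | mul s t => bd s * bd t
  | root s => bd s + 2

theorem bd_nonneg : ∀ t : T ι, 0 ≤ bd t
  | var _ => zero_le_one
  | con _ => abs_nonneg _
  | add s t => add_nonneg (bd_nonneg s) (bd_nonneg t)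
  | mul s t => mul_nonneg (bd_nonneg s) (bd_nonneg t)
  | root s => add_nonneg (bd_nonneg s) zero_le_two

/-- The equation attached to a term. -/
def Eqn : T ι → (T ι → ℝ) → Prop
  | var _, _ => True
  | con q, w => w (con q) = q
  | add s t, w => w (add s t) = w s + w t
  | mul s t, w => w (mul s t) = w s * w t
  | root s, w => Rel (w s) (w (root s))

theorem isClosed_eqn : ∀ t : T ι, IsClosed {w | Eqn t w}
  | var _ => by simp [Eqn]
  | con q => isClosed_eq (by fun_prop) (by fun_prop)
  | add s t => isClosed_eq (by fun_prop) (by fun_prop)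
  | mul s t => isClosed_eq (by fun_prop) (by fun_prop)
  | root s => isClosed_rel.preimage (f := fun w : T ι → ℝ => (w s, w (root s))) (by fun_prop)

/-- Direct subterms. -/
def Child : T ι → Set (T ι)
  | var _ => ∅
  | con _ => ∅
  | add s t => {s, t}
  | mul s t => {s, t}
  | root s => {s}

theorem eqn_congr {t : T ι} {w w' : T ι → ℝ} (h : w t = w' t) (hc : ∀ s ∈ Child t, w s = w' s)
    (H : Eqn t w) : Eqn t w' := by
  cases t <;> simp_all [Eqn, Child]

/-- `W` is a continuum in which the equations of `S` hold. -/
structure Good (S : Set (T ι)) (W : Set (T ι → ℝ)) : Prop where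
  cpt : IsCompact W
  conn : IsConnected W
  bdd : ∀ w ∈ W, ∀ t, |w t| ≤ bd t
  eqn : ∀ w ∈ W, ∀ t ∈ S, Eqn t w
  sub : ∀ t ∈ S, Child t ⊆ S
  vars : ∀ i, var i ∈ S
  onto : ∀ x : ι → ℝ, (∀ i, x i ∈ Icc (0 : ℝ) 1) → ∃ w ∈ W, ∀ i, w (var i) = x i

theorem good_base : ∃ S W, Good (ι := ι) S W := by
  classical
  let φ : (ι → ℝ) → (T ι → ℝ) := fun x t => match t with
    | var i => x i
    | _ => 0
  have hφ : Continuous φ := by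
    refine continuous_pi fun t => ?_
    cases t <;> simp only [φ] <;> fun_prop
  refine ⟨range var, φ '' (univ.pi fun _ => Icc (0 : ℝ) 1), ?_, ?_, ?_, ?_, ?_, ?_, ?_⟩
  · exact (isCompact_univ_pi fun _ => isCompact_Icc).image hφ
  · refine IsConnected.image ⟨⟨fun _ => 0, fun _ _ => ⟨le_rfl, zero_le_one⟩⟩, ?_⟩ _ hφ.continuousOn
    exact isPreconnected_univ_pi fun _ => isPreconnected_Icc
  · rintro _ ⟨x, hx, rfl⟩ t
    cases t with
    | var i =>
      have := hx i (mem_univ _)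
      simp only [φ, bd]
      rw [abs_of_nonneg this.1]; exact this.2
    | _ => simp only [φ, abs_zero]; exact bd_nonneg _
  · rintro w _ _ ⟨i, rfl⟩; trivial
  · rintro _ ⟨i, rfl⟩; simp [Child]
  · exact fun i => ⟨i, rfl⟩
  · intro x hx
    exact ⟨φ x, ⟨x, fun i _ => hx i, rfl⟩, fun i => rfl⟩

open Classical in
/-- Adding one new coordinate, given a continuum of values. -/
theorem Good.update {S : Set (T ι)} {W : Set (T ι → ℝ)} (h : Good S W) {t : T ι} (ht : t ∉ S)
    (hch : Child t ⊆ S) (Z : Set ((T ι → ℝ) × ℝ)) (hZ : IsCompact Z) (hZc : IsConnected Z)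
    (hZW : Prod.fst '' Z = W) (hb : ∀ p ∈ Z, |p.2| ≤ bd t)
    (he : ∀ p ∈ Z, Eqn t (Function.update p.1 t p.2)) :
    Good (insert t S) ((fun p : (T ι → ℝ) × ℝ => Function.update p.1 t p.2) '' Z) := by
  have hc : Continuous (fun p : (T ι → ℝ) × ℝ => Function.update p.1 t p.2) :=
    continuous_fst.update t continuous_snd
  have hm : ∀ p ∈ Z, p.1 ∈ W := fun p hp => hZW ▸ ⟨p, hp, rfl⟩
  refine ⟨hZ.image hc, hZc.image _ hc.continuousOn, ?_, ?_, ?_, ?_, ?_⟩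
  · rintro _ ⟨p, hp, rfl⟩ s
    by_cases hs : s = t
    · subst hs; simpa using hb p hp
    · simpa [hs] using h.bdd _ (hm p hp) s
  · rintro _ ⟨p, hp, rfl⟩ s hs
    rcases hs with rfl | hs
    · exact he p hp
    · refine eqn_congr ?_ ?_ (h.eqn _ (hm p hp) s hs)
      · have : s ≠ t := fun e => ht (e ▸ hs)
        simp [this]
      · intro r hr
        have : r ≠ t := fun e => ht (e ▸ h.sub s hs hr)
        simp [this]
  · rintro s (rfl | hs)
    · exact hch.trans (subset_insert _ _)
    · exact (h.sub s hs).trans (subset_insert _ _)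
  · exact fun i => Or.inr (h.vars i)
  · intro x hx
    obtain ⟨w, hw, hwx⟩ := h.onto x hx
    rw [← hZW] at hw
    obtain ⟨p, hp, rfl⟩ := hw
    refine ⟨_, ⟨p, hp, rfl⟩, fun i => ?_⟩
    have : var i ≠ t := fun e => ht (e ▸ h.vars i)
    simp [this, hwx]

/-- Adding one new coordinate as a continuous function of the old ones. -/
theorem Good.update_fun {S : Set (T ι)} {W : Set (T ι → ℝ)} (h : Good S W) {t : T ι} (ht : t ∉ S)
    (hch : Child t ⊆ S) (g : (T ι → ℝ) → ℝ) (hg : Continuous g)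
    (hb : ∀ w ∈ W, |g w| ≤ bd t)
    (he : ∀ w ∈ W, ∀ w' : T ι → ℝ, (∀ s ∈ Child t, w' s = w s) → w' t = g w → Eqn t w') :
    ∃ W', Good (insert t S) W' := by
  classical
  have hc : Continuous fun w : T ι → ℝ => (w, g w) := by fun_prop
  refine ⟨_, h.update ht hch ((fun w => (w, g w)) '' W) (h.cpt.image hc)
    (h.conn.image _ hc.continuousOn) ?_ ?_ ?_⟩
  · rw [image_image]; simp
  · rintro _ ⟨w, hw, rfl⟩; exact hb w hw
  · rintro _ ⟨w, hw, rfl⟩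
    refine he w hw _ ?_ (by simp)
    intro s hs
    have : s ≠ t := fun e => ht (e ▸ hch hs)
    simp [this]

theorem good_insert (t : T ι) : ∀ S W, Good S W → ∃ S' W', Good S' W' ∧ S ⊆ S' ∧ t ∈ S' := by
  classical
  induction t with
  | var i => exact fun S W h => ⟨S, W, h, subset_rfl, h.vars i⟩
  | con q =>
    intro S W h
    by_cases ht : con q ∈ S
    · exact ⟨S, W, h, subset_rfl, ht⟩
    obtain ⟨W', hW'⟩ := h.update_fun ht (by simp [Child]) (fun _ => q) continuous_const
      (fun w _ => le_rfl) (fun w _ w' _ h => h)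
    exact ⟨_, W', hW', subset_insert _ _, mem_insert _ _⟩
  | add s r hs hr =>
    intro S W h
    obtain ⟨S1, W1, h1, hS1, hs1⟩ := hs S W h
    obtain ⟨S2, W2, h2, hS2, hr2⟩ := hr S1 W1 h1
    have hs2 := hS2 hs1
    by_cases ht : add s r ∈ S2
    · exact ⟨S2, W2, h2, hS1.trans hS2, ht⟩
    obtain ⟨W', hW'⟩ := h2.update_fun ht (by simp [Child, insert_subset_iff, hs2, hr2])
      (fun w => w s + w r) (by fun_prop)
      (fun w hw => (abs_add_le _ _).trans (add_le_add (h2.bdd w hw s) (h2.bdd w hw r)))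
      (fun w _ w' h h' => by
        have e1 := h s (by simp [Child])
        have e2 := h r (by simp [Child])
        simp only [Eqn, h', e1, e2])
    exact ⟨_, W', hW', (hS1.trans hS2).trans (subset_insert _ _), mem_insert _ _⟩
  | mul s r hs hr =>
    intro S W h
    obtain ⟨S1, W1, h1, hS1, hs1⟩ := hs S W h
    obtain ⟨S2, W2, h2, hS2, hr2⟩ := hr S1 W1 h1
    have hs2 := hS2 hs1
    by_cases ht : mul s r ∈ S2
    · exact ⟨S2, W2, h2, hS1.trans hS2, ht⟩
    obtain ⟨W', hW'⟩ := h2.update_fun ht (by simp [Child, insert_subset_iff, hs2, hr2])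
      (fun w => w s * w r) (by fun_prop)
      (fun w hw => by
        rw [abs_mul]
        exact mul_le_mul (h2.bdd w hw s) (h2.bdd w hw r) (abs_nonneg _) (bd_nonneg _))
      (fun w _ w' h h' => by
        have e1 := h s (by simp [Child])
        have e2 := h r (by simp [Child])
        simp only [Eqn, h', e1, e2])
    exact ⟨_, W', hW', (hS1.trans hS2).trans (subset_insert _ _), mem_insert _ _⟩
  | root s hs =>
    intro S W h
    obtain ⟨S1, W1, h1, hS1, hs1⟩ := hs S W h
    by_cases ht : root s ∈ S1
    · exact ⟨S1, W1, h1, hS1, ht⟩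
    obtain ⟨Z, z1, z2, z3, z4⟩ := step_set h1.cpt h1.conn (f := fun w => w s) (by fun_prop)
    refine ⟨_, _, h1.update ht (by simp [Child, hs1]) Z z1 z2 z4 ?_ ?_,
      hS1.trans (subset_insert _ _), mem_insert _ _⟩
    · intro p hp
      have := (z3 p hp).abs_le
      have h2 := h1.bdd p.1 (z4 ▸ ⟨p, hp, rfl⟩) s
      simp only [bd]; linarith
    · intro p hp
      have : s ≠ root s := fun e => ht (e ▸ hs1)
      simpa [Eqn, this] using z3 p hp

theorem good_finset (F : Finset (T ι)) : ∃ S W, Good S W ∧ (F : Set (T ι)) ⊆ S := by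
  classical
  induction F using Finset.induction_on with
  | empty =>
    obtain ⟨S, W, h⟩ := good_base (ι := ι)
    exact ⟨S, W, h, by simp⟩
  | insert t F _ ih =>
    obtain ⟨S, W, h, hF⟩ := ih
    obtain ⟨S', W', h', hS, ht⟩ := good_insert t S W h
    refine ⟨S', W', h', ?_⟩
    rw [Finset.coe_insert]
    exact insert_subset ht (hF.trans hS)

/-- The limit continuum: all equations hold. -/
theorem exists_limit (ι : Type u) : ∃ Z : Set (T ι → ℝ), IsCompact Z ∧ IsConnected Z ∧
    (∀ z ∈ Z, ∀ t, Eqn t z) ∧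
    (∀ x : ι → ℝ, (∀ i, x i ∈ Icc (0 : ℝ) 1) → ∃ z ∈ Z, ∀ i, z (var i) = x i) := by
  classical
  choose S W hW hS using good_finset (ι := ι)
  let 𝒰 : Ultrafilter (Finset (T ι)) := Ultrafilter.of Filter.atTop
  let Q : Set (T ι → ℝ) := univ.pi fun t => Icc (-bd t) (bd t)
  have hQ : IsCompact Q := isCompact_univ_pi fun _ => isCompact_Icc
  have hWQ : ∀ F, W F ⊆ Q := fun F w hw t _ => abs_le.1 ((hW F).bdd w hw t)
  let Z : Set (T ι → ℝ) := {z | ∀ U ∈ 𝓝 z, ∀ᶠ F in (𝒰 : Filter _), (W F ∩ U).Nonempty}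
  have hZcl : IsClosed Z := by
    rw [← isOpen_compl_iff, isOpen_iff_mem_nhds]
    intro z hz
    simp only [Z, mem_compl_iff, mem_ofPred_eq, not_forall] at hz
    obtain ⟨U, hU, hn⟩ := hz
    filter_upwards [eventually_mem_nhds_iff.2 hU] with y hy hyZ
    exact hn (hyZ U hy)
  have hin : ∀ K : Set (T ι → ℝ), IsClosed K → (∀ᶠ F in (𝒰 : Filter _), W F ⊆ K) → Z ⊆ K := by
    intro K hK hev z hz
    by_contra hzK
    have := hz _ (hK.isOpen_compl.mem_nhds hzK)
    obtain ⟨F, h1, w, hw, hw'⟩ := (hev.and this).exists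
    exact hw' (h1 hw)
  have hout : ∀ O : Set (T ι → ℝ), IsOpen O → Z ⊆ O → ∀ᶠ F in (𝒰 : Filter _), W F ⊆ O := by
    intro O hO hZO
    have hc : IsCompact (Q \ O) := hQ.diff hO
    have : ∀ᶠ F in (𝒰 : Filter _), W F ∩ (Q \ O) = ∅ := by
      refine hc.induction_on (p := fun s => ∀ᶠ F in (𝒰 : Filter _), W F ∩ s = ∅) ?_ ?_ ?_ ?_
      · simp
      · intro s t hst ht
        filter_upwards [ht] with F hF
        exact subset_empty_iff.1 ((inter_subset_inter_right _ hst).trans hF.subset)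
      · intro s t hs ht
        filter_upwards [hs, ht] with F h1 h2
        rw [inter_union_distrib_left, h1, h2, union_empty]
      · intro z hz
        have hzZ : z ∉ Z := fun h => hz.2 (hZO h)
        simp only [Z, mem_ofPred_eq, not_forall] at hzZ
        obtain ⟨U, hU, hn⟩ := hzZ
        refine ⟨U, mem_nhdsWithin_of_mem_nhds hU, ?_⟩
        have := Ultrafilter.eventually_not.2 hn
        filter_upwards [this] with F hF
        exact not_nonempty_iff_eq_empty.1 hF
    filter_upwards [this] with F hF w hw
    by_contra hwO
    have : w ∈ W F ∩ (Q \ O) := ⟨hw, hWQ F hw, hwO⟩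
    rw [hF] at this
    exact this
  have hZQ : Z ⊆ Q := hin Q hQ.isClosed (Filter.Eventually.of_forall hWQ)
  have hZ : IsCompact Z := hQ.of_isClosed_subset hZcl hZQ
  have honto : ∀ x : ι → ℝ, (∀ i, x i ∈ Icc (0 : ℝ) 1) → ∃ z ∈ Z, ∀ i, z (var i) = x i := by
    intro x hx
    choose w hw hwx using fun F => (hW F).onto x hx
    obtain ⟨z, hzQ, hz⟩ := isCompact_iff_ultrafilter_le_nhds.1 hQ (𝒰.map w) (by
      rw [Filter.le_principal_iff]
      exact Filter.mem_map.2 (Filter.univ_mem' fun F => hWQ F (hw F)))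
    refine ⟨z, ?_, fun i => ?_⟩
    · intro U hU
      have : ∀ᶠ F in (𝒰 : Filter _), w F ∈ U := hz hU
      filter_upwards [this] with F hF
      exact ⟨w F, hw F, hF⟩
    · have hcl : IsClosed {y : T ι → ℝ | y (var i) = x i} :=
        isClosed_eq (by fun_prop) continuous_const
      by_contra hne
      have : ∀ᶠ F in (𝒰 : Filter _), w F ∈ {y : T ι → ℝ | y (var i) = x i}ᶜ :=
        hz (hcl.isOpen_compl.mem_nhds hne)
      obtain ⟨F, hF⟩ := this.exists
      exact hF (hwx F i)
  refine ⟨Z, hZ, ⟨?_, ?_⟩, ?_, honto⟩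
  · obtain ⟨z, hz, _⟩ := honto (fun _ => 0) (by simp)
    exact ⟨z, hz⟩
  · rw [isPreconnected_iff_subset_of_fully_disjoint_closed hZcl]
    intro u v hu hv huv hd
    obtain ⟨U, V, hU, hV, huU, hvV, hUV⟩ := SeparatedNhds.of_isCompact_isCompact
      (hZ.inter_right hu) (hZ.inter_right hv) (hd.mono inter_subset_right inter_subset_right)
    have hZUV : Z ⊆ U ∪ V := fun z hz => (huv hz).imp (fun h => huU ⟨hz, h⟩) (fun h => hvV ⟨hz, h⟩)
    have h1 : ∀ᶠ F in (𝒰 : Filter _), W F ⊆ U ∨ W F ⊆ V := by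
      filter_upwards [hout _ (hU.union hV) hZUV] with F hF
      exact IsPreconnected.subset_or_subset hU hV hUV hF (hW F).conn.isPreconnected
    have aux : ∀ U V : Set (T ι → ℝ), IsOpen V → Disjoint U V →
        (∀ᶠ F in (𝒰 : Filter _), W F ⊆ U) → ∀ z ∈ Z, z ∉ V := by
      intro U V hV hUV hev z hz hzV
      obtain ⟨F, h1, w, hw, hw'⟩ := (hev.and (hz V (hV.mem_nhds hzV))).exists
      exact hUV.le_bot ⟨h1 hw, hw'⟩
    rcases Ultrafilter.eventually_or.1 h1 with h | h
    · left
      exact fun z hz => (huv hz).resolve_right fun h' => aux U V hV hUV h z hz (hvV ⟨hz, h'⟩)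
    · right
      exact fun z hz => (huv hz).resolve_left fun h' => aux V U hU hUV.symm h z hz (huU ⟨hz, h'⟩)
  · intro z hz t
    refine hin {w | Eqn t w} (isClosed_eqn t) ?_ hz
    have : ∀ᶠ F in (𝒰 : Filter (Finset (T ι))), ({t} : Finset (T ι)) ≤ F :=
      (Ultrafilter.of_le Filter.atTop) (Filter.eventually_ge_atTop ({t} : Finset (T ι)))
    filter_upwards [this] with F hF w hw
    exact (hW F).eqn w hw t (hS F (hF (by simp)))

theorem card_le (ι : Type u) (hι : Cardinal.aleph0 ≤ Cardinal.mk ι) :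
    Cardinal.mk (T ι) ≤ Cardinal.mk ι := by
  let α : Type u := ι ⊕ ULift.{u} ℚ ⊕ ULift.{u} (Fin 3)
  let β : α → Type u := fun a => match a with
    | Sum.inl _ => PEmpty
    | Sum.inr (Sum.inl _) => PEmpty
    | Sum.inr (Sum.inr _) => ULift.{u} Bool
  have : ∀ a, Finite (β a) := by
    rintro (a | a | a) <;> simp only [β] <;> infer_instance
  let φ : WType β → T ι := WType.elim (T ι) (fun p : (Σ a, β a → T ι) => match p with
    | ⟨Sum.inl i, _⟩ => var i
    | ⟨Sum.inr (Sum.inl q), _⟩ => con q.down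
    | ⟨Sum.inr (Sum.inr k), g⟩ =>
      if k.down = 0 then add (g ⟨false⟩) (g ⟨true⟩)
      else if k.down = 1 then mul (g ⟨false⟩) (g ⟨true⟩)
      else root (g ⟨false⟩))
  have hφ : Surjective φ := by
    intro t
    induction t with
    | var i => exact ⟨WType.mk (Sum.inl i) PEmpty.elim, rfl⟩
    | con q => exact ⟨WType.mk (Sum.inr (Sum.inl ⟨q⟩)) PEmpty.elim, rfl⟩
    | add s r hs hr =>
      obtain ⟨a, rfl⟩ := hs
      obtain ⟨b, rfl⟩ := hr
      exact ⟨WType.mk (Sum.inr (Sum.inr ⟨0⟩)) (fun c : ULift Bool => if c.down then b else a), rfl⟩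
    | mul s r hs hr =>
      obtain ⟨a, rfl⟩ := hs
      obtain ⟨b, rfl⟩ := hr
      exact ⟨WType.mk (Sum.inr (Sum.inr ⟨1⟩)) (fun c : ULift Bool => if c.down then b else a), rfl⟩
    | root s hs =>
      obtain ⟨a, rfl⟩ := hs
      exact ⟨WType.mk (Sum.inr (Sum.inr ⟨2⟩)) (fun c : ULift Bool => a), rfl⟩
  have hα : Cardinal.mk α ≤ Cardinal.mk ι := by
    simp only [α, Cardinal.mk_sum, Cardinal.lift_id, Cardinal.mk_uLift]
    refine Cardinal.add_le_of_le hι le_rfl (Cardinal.add_le_of_le hι ?_ ?_)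
    · simpa using hι
    · simpa using (Cardinal.natCast_lt_aleph0 (n := 3)).le.trans hι
  exact (Cardinal.mk_le_of_surjective hφ).trans
    (WType.cardinalMk_le_max_aleph0_of_finite.trans (max_le hα hι))

end T

section Final

variable {ι : Type u} {Z : Set (T ι → ℝ)}

/-- Coordinate function. -/
def ev (Z : Set (T ι → ℝ)) (t : T ι) : C(Z, ℝ) := ⟨fun z => z.1 t, (continuous_apply t).comp continuous_subtype_val⟩

theorem dense_ev [CompactSpace Z] (hE : ∀ z ∈ Z, ∀ t, T.Eqn t z) (f : C(Z, ℝ)) :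
    ∃ t, ∀ z, |ev Z t z - f z| < 1 := by
  have hadd : ∀ s t, ev Z s + ev Z t = ev Z (T.add s t) := by
    intro s t; ext z; exact (hE z.1 z.2 (T.add s t)).symm
  have hmul : ∀ s t, ev Z s * ev Z t = ev Z (T.mul s t) := by
    intro s t; ext z; exact (hE z.1 z.2 (T.mul s t)).symm
  have hcon : ∀ (q : ℚ) z, ev Z (T.con q) z = q := by
    intro q z; exact hE z.1 z.2 (T.con q)
  let R : Subring C(Z, ℝ) :=
    { carrier := range (ev Z)
      mul_mem' := by
        rintro _ _ ⟨s, rfl⟩ ⟨t, rfl⟩; exact ⟨_, (hmul s t).symm⟩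
      add_mem' := by
        rintro _ _ ⟨s, rfl⟩ ⟨t, rfl⟩; exact ⟨_, (hadd s t).symm⟩
      one_mem' := ⟨T.con 1, by ext z; rw [hcon]; simp⟩
      zero_mem' := ⟨T.con 0, by ext z; rw [hcon]; simp⟩
      neg_mem' := by
        rintro _ ⟨s, rfl⟩
        refine ⟨T.mul (T.con (-1)) s, ?_⟩
        rw [← hmul]; ext z
        rw [ContinuousMap.mul_apply, hcon]; simp }
  let A : Subalgebra ℝ C(Z, ℝ) :=
    { R.topologicalClosure with
      algebraMap_mem' := by
        intro r
        change algebraMap ℝ C(Z, ℝ) r ∈ closure (range (ev Z))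
        have hc : Continuous (algebraMap ℝ C(Z, ℝ)) := continuous_algebraMap ℝ C(Z, ℝ)
        have hr : r ∈ closure (range ((↑) : ℚ → ℝ)) := Rat.denseRange_cast r
        have := image_closure_subset_closure_image hc ⟨r, hr, rfl⟩
        refine closure_mono ?_ this
        rintro _ ⟨_, ⟨q, rfl⟩, rfl⟩
        exact ⟨T.con q, by ext z; rw [hcon]; simp⟩ }
  have hA : A.SeparatesPoints := by
    intro x y hxy
    have : ∃ t, x.1 t ≠ y.1 t := by
      by_contra h
      push Not at h
      exact hxy (Subtype.ext (funext h))
    obtain ⟨t, ht⟩ := this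
    exact ⟨ev Z t, ⟨ev Z t, subset_closure ⟨t, rfl⟩, rfl⟩, ht⟩
  have htop := ContinuousMap.subalgebra_topologicalClosure_eq_top_of_separatesPoints A hA
  have hf : f ∈ A.topologicalClosure := htop ▸ Algebra.mem_top
  have hf2 : f ∈ closure (closure (range (ev Z))) := hf
  rw [closure_closure, Metric.mem_closure_iff] at hf2
  obtain ⟨_, ⟨t, rfl⟩, ht⟩ := hf2 1 one_pos
  refine ⟨t, fun z => ?_⟩
  rw [dist_comm] at ht
  exact (ContinuousMap.dist_apply_le_dist z).trans_lt ht

theorem hi [CompactSpace Z] (hE : ∀ z ∈ Z, ∀ t, T.Eqn t z) : HereditarilyIndecomposable Z := by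
  intro A B hA hAc hB hBc ⟨p, hpA, hpB⟩
  by_contra hcon
  rw [not_or, not_subset, not_subset] at hcon
  obtain ⟨⟨a, haA, haB⟩, ⟨b, hbB, hbA⟩⟩ := hcon
  obtain ⟨f1, f1a, f1B, f1r⟩ := exists_continuous_zero_one_of_isClosed (isClosed_singleton (x := a))
    hB (by simpa using haB)
  obtain ⟨f2, f2A, f2b, f2r⟩ := exists_continuous_zero_one_of_isClosed hA
    (isClosed_singleton (x := b)) (by simpa using hbA)
  obtain ⟨s, hs⟩ := dense_ev hE ((2 : ℝ) • (f1 + f2 - 1))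
  have hs' : ∀ z : Z, |z.1 s - 2 * (f1 z + f2 z - 1)| < 1 := by
    intro z; simpa [ev] using hs z
  have hrel : ∀ z : Z, Rel (z.1 s) (z.1 (T.root s)) := fun z => hE z.1 z.2 (T.root s)
  have hcont : Continuous fun z : Z => z.1 (T.root s) := (ev Z (T.root s)).continuous
  have hsA : ∀ z ∈ A, z.1 s < 1 := by
    intro z hz
    have h1 := (abs_lt.1 (hs' z)).2
    have h2 : f2 z = 0 := f2A hz
    have h3 := (f1r z).2
    linarith
  have hsB : ∀ z ∈ B, -1 < z.1 s := by
    intro z hz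
    have h1 := (abs_lt.1 (hs' z)).1
    have h2 : f1 z = 1 := f1B hz
    have h3 := (f2r z).1
    linarith
  have hsa : a.1 s < -1 := by
    have h1 := (abs_lt.1 (hs' a)).2
    have h2 : f1 a = 0 := f1a rfl
    have h3 : f2 a = 0 := f2A haA
    linarith
  have hsb : 1 < b.1 s := by
    have h1 := (abs_lt.1 (hs' b)).1
    have h2 : f2 b = 1 := f2b rfl
    have h3 : f1 b = 1 := f1B hbB
    linarith
  have hha : a.1 (T.root s) < -1 := by
    rcases hrel a with ⟨_, h⟩ | ⟨h, _⟩ | ⟨h, _⟩ <;> linarith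
  have hhb : 1 < b.1 (T.root s) := by
    rcases hrel b with ⟨h, _⟩ | ⟨_, h, _⟩ | ⟨_, h⟩ <;> linarith
  have hpa : p.1 (T.root s) < -1 := by
    by_contra hp
    obtain ⟨z, hz, hze⟩ := hAc.isPreconnected.intermediate_value haA hpA hcont.continuousOn
      ⟨hha.le, not_lt.1 hp⟩
    have := hsA z hz
    simp only at hze
    rcases hrel z with ⟨_, h⟩ | ⟨_, _, h⟩ | ⟨_, h⟩ <;> linarith
  have hpb : 1 < p.1 (T.root s) := by
    by_contra hp
    obtain ⟨z, hz, hze⟩ := hBc.isPreconnected.intermediate_value hpB hbB hcont.continuousOn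
      ⟨not_lt.1 hp, hhb.le⟩
    have := hsB z hz
    simp only at hze
    rcases hrel z with ⟨_, h⟩ | ⟨_, _, h⟩ | ⟨_, h⟩ <;> linarith
  linarith

/-- A base for the topology indexed by finite sets of rational conditions. -/
def bset (Z : Set (T ι → ℝ)) (F : Finset (T ι × ℚ × ℚ)) : Set Z :=
  {z | ∀ c ∈ F, z.1 c.1 ∈ Ioo (c.2.1 : ℝ) (c.2.2 : ℝ)}

theorem basis_bset (Z : Set (T ι → ℝ)) :
    TopologicalSpace.IsTopologicalBasis (range (bset Z)) := by
  classical
  refine TopologicalSpace.isTopologicalBasis_of_isOpen_of_nhds ?_ ?_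
  · rintro _ ⟨F, rfl⟩
    have : bset Z F = ⋂ c ∈ F, (fun z : Z => z.1 c.1) ⁻¹' Ioo (c.2.1 : ℝ) (c.2.2 : ℝ) := by
      ext z; simp [bset]
    rw [this]
    exact isOpen_biInter_finset fun c _ => isOpen_Ioo.preimage (ev Z c.1).continuous
  · intro z u hz hu
    obtain ⟨O, hO, rfl⟩ := isOpen_induced_iff.1 hu
    obtain ⟨I, v, hv, hIv⟩ := isOpen_pi_iff.1 hO z.1 hz
    have : ∀ t : T ι, ∃ p q : ℚ, t ∈ I → (p : ℝ) < z.1 t ∧ z.1 t < q ∧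
        Ioo (p : ℝ) (q : ℝ) ⊆ v t := by
      intro t
      by_cases ht : t ∈ I
      · obtain ⟨ε, hε, hball⟩ := Metric.isOpen_iff.1 (hv t ht).1 _ (hv t ht).2
        obtain ⟨p, hp1, hp2⟩ := exists_rat_btwn (show z.1 t - ε < z.1 t by linarith)
        obtain ⟨q, hq1, hq2⟩ := exists_rat_btwn (show z.1 t < z.1 t + ε by linarith)
        refine ⟨p, q, fun _ => ⟨hp2, hq1, fun y hy => hball ?_⟩⟩
        rw [Real.ball_eq_Ioo]
        exact ⟨hp1.trans hy.1, hy.2.trans hq2⟩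
      · exact ⟨0, 0, fun h => absurd h ht⟩
    choose p q hpq using this
    refine ⟨_, ⟨I.image fun t => (t, p t, q t), rfl⟩, ?_, ?_⟩
    · intro c hc
      obtain ⟨t, ht, rfl⟩ := Finset.mem_image.1 hc
      exact ⟨(hpq t ht).1, (hpq t ht).2.1⟩
    · intro y hy
      refine hIv fun t ht => (hpq t ht).2.2 ?_
      exact hy (t, p t, q t) (Finset.mem_image_of_mem _ ht)

theorem card_bset (hι : Cardinal.aleph0 ≤ Cardinal.mk ι) (Z : Set (T ι → ℝ)) :
    Cardinal.mk (range (bset Z)) ≤ Cardinal.mk ι := by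
  have : Infinite ι := Cardinal.infinite_iff.2 hι
  have : Infinite (T ι) := Infinite.of_injective T.var fun a b h => by cases h; rfl
  refine Cardinal.mk_range_le.trans ?_
  rw [Cardinal.mk_finset_of_infinite, Cardinal.mk_prod]
  refine Cardinal.mul_le_of_le hι ?_ ?_
  · simpa using T.card_le ι hι
  · simpa using hι

end Final

end HIC

/-- For every infinite cardinal `κ` there is a hereditarily indecomposable continuum
of weight exactly `κ`: it has a base of cardinality `κ` and no basis of smaller
cardinality. -/
theorem exists_hereditarilyIndecomposable_continuum_of_weight
    (κ : Cardinal.{u}) (hκ : Cardinal.aleph0 ≤ κ) :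
    ∃ (X : Type u) (tX : TopologicalSpace X),
      @CompactSpace X tX ∧ @T2Space X tX ∧ @ConnectedSpace X tX ∧ Nonempty X ∧
      @HereditarilyIndecomposable X tX ∧
      (∃ B : Set (Set X), @TopologicalSpace.IsTopologicalBasis X tX B ∧
        Cardinal.mk B = κ) ∧
      (∀ B : Set (Set X), @TopologicalSpace.IsTopologicalBasis X tX B →
        κ ≤ Cardinal.mk B) := by
  classical
  induction κ using Cardinal.inductionOn with
  | _ ι =>
  obtain ⟨Z, hZ, hZc, hE, honto⟩ := HIC.T.exists_limit ι
  have : CompactSpace Z := isCompact_iff_compactSpace.1 hZ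
  have : ConnectedSpace Z := isConnected_iff_connectedSpace.1 hZc
  have hlow : ∀ B : Set (Set Z), TopologicalSpace.IsTopologicalBasis B →
      Cardinal.mk ι ≤ Cardinal.mk B := by
    intro B hB
    have hpt : ∀ i : ι, ∃ z : Z, ∀ j, z.1 (HIC.T.var j) = if j = i then 1 else 0 := by
      intro i
      obtain ⟨z, hz, h⟩ := honto (fun j => if j = i then 1 else 0) (by
        intro j; by_cases h : j = i <;> simp [h])
      exact ⟨⟨z, hz⟩, h⟩
    choose z hz using hpt
    have hb : ∀ i : ι, ∃ b ∈ B, z i ∈ b ∧ b ⊆ {y : Z | 0 < y.1 (HIC.T.var i)} := by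
      intro i
      refine hB.exists_subset_of_mem_open ?_ ?_
      · simp [hz]
      · exact isOpen_lt continuous_const (HIC.ev Z (HIC.T.var i)).continuous
    choose b hbB hzb hbs using hb
    refine Cardinal.mk_le_of_injective (f := fun i => (⟨b i, hbB i⟩ : B)) ?_
    intro i j hij
    by_contra hne
    have e : b i = b j := congrArg Subtype.val hij
    have h1 : 0 < (z j).1 (HIC.T.var i) := hbs i (e ▸ hzb j)
    rw [hz, if_neg hne] at h1
    exact lt_irrefl _ h1
  refine ⟨Z, inferInstance, inferInstance, inferInstance, inferInstance, inferInstance,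
    HIC.hi hE, ⟨range (HIC.bset Z), HIC.basis_bset Z, ?_⟩, hlow⟩
  exact le_antisymm (HIC.card_bset hκ Z) (hlow _ (HIC.basis_bset Z))
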